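/- arXiv:1410.2906 — 5 statements merged into one kernel-verified Lean document; each statement's English description precedes it below -/
import Mathlib

section
/- Let (X, d_X) and (Y, d_Y) be nonempty compact metric spaces. Let (ε_n) be a sequence of positive reals with ε_n → 0, let A_n ⊆ X and B_n ⊆ Y be nonempty ε_n-nets, and let H_n : A_n → B_n be bijections whose distortions (measured with respect to the ambient distances d_X and d_Y) satisfy dis H_n → 0. Then there exist a strictly increasing sequence of indices (n_k) and a distance-preserving bijection H : X → Y such that sup_{p ∈ A_{n_k}} d_Y(H_{n_k}(p), H(p)) → 0 and sup_{q ∈ B_{n_k}} d_X(H_{n_k}^{-1}(q), H^{-1}(q)) → 0 as k → ∞. -/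
open Filter Topology

/-!
Along an ultrafilter every sequence of points in a compact space converges. Sending the limit of
points `f i (p i)` of `X` to the limit of the corresponding points `g i (p i)` of `Y` therefore
defines an isometry `X → Y`, because distortions vanish in the limit. The situation is symmetric in
`X` and `Y`, and the isometry `Y → X` obtained by exchanging them is its inverse. Convergence is
uniform since along any choice of points `p i`, in particular along the worst ones, both
`g i (p i)` and `H (f i (p i))` converge to the image of the limit of `f i (p i)`.
-/

theorem eventually_forall_of_forall_choice {ι : Type*} {P : ι → Type*} [∀ i, Nonempty (P i)]
    {l : Filter ι} {Q : ∀ i, P i → Prop} (h : ∀ p : ∀ i, P i, ∀ᶠ i in l, Q i (p i)) :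
    ∀ᶠ i in l, ∀ p, Q i p := by
  have exists_worst (i : ι) : ∃ p, Q i p → ∀ q, Q i q := by
    by_cases hQ : ∀ q, Q i q
    · exact ⟨Classical.arbitrary (P i), fun _ => hQ⟩
    · exact (not_forall.1 hQ).imp fun _ hp hp' => absurd hp' hp
  choose p hp using exists_worst
  exact (h p).mono hp

/-- A family of correspondences between `X` and `Y` which along `l` is asymptotically dense on both
sides and asymptotically free of distortion. The `i`-th correspondence is the set of pairs
`(f i p, g i p)`, so that the graph of a map and a general relation are treated alike. All
conditions are phrased through choices `p : ∀ i, P i` of one pair for each index. -/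
structure IsAsymptoticIsometry {ι X Y : Type*} {P : ι → Type*} [PseudoMetricSpace X]
    [PseudoMetricSpace Y] (l : Filter ι) (f : ∀ i, P i → X) (g : ∀ i, P i → Y) : Prop where
  tendsto_dist_sub_dist (p q : ∀ i, P i) :
    Tendsto (fun i => dist (f i (p i)) (f i (q i)) - dist (g i (p i)) (g i (q i))) l (𝓝 0)
  exists_tendsto_left (x : X) : ∃ p : ∀ i, P i, Tendsto (fun i => f i (p i)) l (𝓝 x)
  exists_tendsto_right (y : Y) : ∃ p : ∀ i, P i, Tendsto (fun i => g i (p i)) l (𝓝 y)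

namespace IsAsymptoticIsometry

section PseudoMetricSpace

variable {ι X Y : Type*} {P : ι → Type*} [PseudoMetricSpace X] [PseudoMetricSpace Y]
  {l : Filter ι} {f : ∀ i, P i → X} {g : ∀ i, P i → Y}

theorem of_dist_le {ε δ : ι → ℝ} (hε : Tendsto ε l (𝓝 0)) (hδ : Tendsto δ l (𝓝 0))
    (hf : ∀ i x, ∃ p, dist x (f i p) ≤ ε i) (hg : ∀ i y, ∃ p, dist y (g i p) ≤ ε i)
    (hfg : ∀ i p q, |dist (f i p) (f i q) - dist (g i p) (g i q)| ≤ δ i) :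
    IsAsymptoticIsometry l f g where
  tendsto_dist_sub_dist p q := squeeze_zero_norm (fun i => hfg i (p i) (q i)) hδ
  exists_tendsto_left x := by
    choose p hp using fun i => hf i x
    exact ⟨p, tendsto_iff_dist_tendsto_zero.2 <|
      squeeze_zero (fun _ => dist_nonneg) (fun i => dist_comm x _ ▸ hp i) hε⟩
  exists_tendsto_right y := by
    choose p hp using fun i => hg i y
    exact ⟨p, tendsto_iff_dist_tendsto_zero.2 <|
      squeeze_zero (fun _ => dist_nonneg) (fun i => dist_comm y _ ▸ hp i) hε⟩

theorem symm (h : IsAsymptoticIsometry l f g) : IsAsymptoticIsometry l g f where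
  tendsto_dist_sub_dist p q := by simpa using (h.tendsto_dist_sub_dist p q).neg
  exists_tendsto_left := h.exists_tendsto_right
  exists_tendsto_right := h.exists_tendsto_left

theorem mono {l' : Filter ι} (h : IsAsymptoticIsometry l f g) (hl : l' ≤ l) :
    IsAsymptoticIsometry l' f g where
  tendsto_dist_sub_dist p q := (h.tendsto_dist_sub_dist p q).mono_left hl
  exists_tendsto_left x := (h.exists_tendsto_left x).imp fun _ hp => hp.mono_left hl
  exists_tendsto_right y := (h.exists_tendsto_right y).imp fun _ hp => hp.mono_left hl

theorem tendsto_dist_right (h : IsAsymptoticIsometry l f g) {p q : ∀ i, P i} {x x' : X}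
    (hp : Tendsto (fun i => f i (p i)) l (𝓝 x)) (hq : Tendsto (fun i => f i (q i)) l (𝓝 x')) :
    Tendsto (fun i => dist (g i (p i)) (g i (q i))) l (𝓝 (dist x x')) := by
  simpa using (hp.dist hq).sub (h.tendsto_dist_sub_dist p q)

theorem tendsto_right_of_tendsto_left (h : IsAsymptoticIsometry l f g) {p q : ∀ i, P i}
    {x : X} {y : Y} (hp : Tendsto (fun i => f i (p i)) l (𝓝 x))
    (hq : Tendsto (fun i => f i (q i)) l (𝓝 x)) (hqy : Tendsto (fun i => g i (q i)) l (𝓝 y)) :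
    Tendsto (fun i => g i (p i)) l (𝓝 y) :=
  (tendsto_iff_of_dist (by simpa using h.tendsto_dist_right hp hq)).2 hqy

theorem exists_isometry {U : Ultrafilter ι} [CompactSpace Y]
    (h : IsAsymptoticIsometry (U : Filter ι) f g) :
    ∃ H : X → Y, Isometry H ∧ ∀ (p : ∀ i, P i) (x : X),
      Tendsto (fun i => f i (p i)) U (𝓝 x) → Tendsto (fun i => g i (p i)) U (𝓝 (H x)) := by
  choose p hp using h.exists_tendsto_left
  have exists_limit (x : X) : ∃ y, Tendsto (fun i => g i (p x i)) U (𝓝 y) :=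
    ⟨_, (U.map fun i => g i (p x i)).le_nhds_lim⟩
  choose H hH using exists_limit
  refine ⟨H, Isometry.of_dist_eq fun x x' => ?_, fun q x hq =>
    h.tendsto_right_of_tendsto_left hq (hp x) (hH x)⟩
  exact tendsto_nhds_unique ((hH x).dist (hH x')) (h.tendsto_dist_right (hp x) (hp x'))

end PseudoMetricSpace

section MetricSpace

variable {ι X Y : Type*} {P : ι → Type*} [MetricSpace X] [MetricSpace Y] [CompactSpace Y]
  {U : Ultrafilter ι} {f : ∀ i, P i → X} {g : ∀ i, P i → Y}

theorem compactSpace_left [CompleteSpace X] (h : IsAsymptoticIsometry (U : Filter ι) f g) :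
    CompactSpace X := by
  obtain ⟨H, hH, -⟩ := h.exists_isometry
  exact hH.isClosedEmbedding.compactSpace

theorem exists_isometryEquiv [CompactSpace X] (h : IsAsymptoticIsometry (U : Filter ι) f g) :
    ∃ H : X ≃ᵢ Y, ∀ (p : ∀ i, P i) (x : X),
      Tendsto (fun i => f i (p i)) U (𝓝 x) → Tendsto (fun i => g i (p i)) U (𝓝 (H x)) := by
  obtain ⟨H, hH, hfg⟩ := h.exists_isometry
  obtain ⟨K, -, hgf⟩ := h.symm.exists_isometry
  have right_inv (y : Y) : H (K y) = y := by
    obtain ⟨p, hp⟩ := h.exists_tendsto_right y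
    exact tendsto_nhds_unique (hfg p _ (hgf p y hp)) hp
  exact ⟨IsometryEquiv.mk' H K right_inv hH, hfg⟩

theorem exists_isometryEquiv_eventually_dist_le [CompleteSpace X]
    (h : IsAsymptoticIsometry (U : Filter ι) f g) :
    ∃ H : X ≃ᵢ Y, ∀ η > 0, ∀ᶠ i in (U : Filter ι), ∀ p, dist (g i p) (H (f i p)) ≤ η := by
  have := h.compactSpace_left
  obtain ⟨H, hH⟩ := h.exists_isometryEquiv
  refine ⟨H, fun η hη => ?_⟩
  have tendsto_dist (p : ∀ i, P i) :
      Tendsto (fun i => dist (g i (p i)) (H (f i (p i)))) U (𝓝 0) := by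
    have hx := (U.map fun i => f i (p i)).le_nhds_lim
    simpa using (hH p _ hx).dist ((H.continuous.tendsto _).comp hx)
  cases isEmpty_or_nonempty X with
  | inl _ => exact .of_forall fun i p => isEmptyElim (f i p)
  | inr hX =>
    obtain ⟨p₀, -⟩ := h.exists_tendsto_left hX.some
    have (i : ι) : Nonempty (P i) := ⟨p₀ i⟩
    exact eventually_forall_of_forall_choice fun p =>
      ((tendsto_dist p).eventually_lt_const hη).mono fun _ => le_of_lt

end MetricSpace

end IsAsymptoticIsometry

theorem limit_isometry_of_net_bijections_general {X Y : Type*} {P : ℕ → Type*}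
    [MetricSpace X] [CompleteSpace X] [MetricSpace Y] [CompactSpace Y]
    {f : ∀ n, P n → X} {g : ∀ n, P n → Y} (h : IsAsymptoticIsometry atTop f g) :
    ∃ φ : ℕ → ℕ, StrictMono φ ∧ ∃ H : X ≃ᵢ Y,
      (∀ η > 0, ∃ N, ∀ k ≥ N, ∀ p, dist (g (φ k) p) (H (f (φ k) p)) ≤ η) ∧
      (∀ η > 0, ∃ N, ∀ k ≥ N, ∀ p, dist (f (φ k) p) (H.symm (g (φ k) p)) ≤ η) := by
  obtain ⟨H, hH⟩ := (h.mono Nat.hyperfilter_le_atTop).exists_isometryEquiv_eventually_dist_le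
  obtain ⟨φ, hφ, hφH⟩ := extraction_forall_of_frequently fun m : ℕ =>
    (hH (1 / (m + 1)) Nat.one_div_pos_of_nat).frequently.filter_mono Nat.hyperfilter_le_atTop
  have dist_le : ∀ η > 0, ∃ N, ∀ k ≥ N, ∀ p, dist (g (φ k) p) (H (f (φ k) p)) ≤ η := by
    intro η hη
    obtain ⟨N, hN⟩ := exists_nat_one_div_lt hη
    exact ⟨N, fun k hk p => (hφH k p).trans ((Nat.one_div_le_one_div hk).trans hN.le)⟩
  have dist_symm (x : X) (y : Y) : dist x (H.symm y) = dist y (H x) := by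
    rw [← H.dist_eq, H.apply_symm_apply, dist_comm]
  exact ⟨φ, hφ, H, dist_le, by simpa only [dist_symm] using dist_le⟩

/-- Compact metric limit of almost-isometric bijections between nets:
existence of a subsequence and a distance-preserving bijection approximating them. -/
theorem limit_isometry_of_net_bijections
    {X Y : Type*} [MetricSpace X] [CompactSpace X] [Nonempty X]
    [MetricSpace Y] [CompactSpace Y] [Nonempty Y]
    (ε : ℕ → ℝ) (hεpos : ∀ n, 0 < ε n) (hε : Tendsto ε atTop (𝓝 0))
    (A : ℕ → Set X) (B : ℕ → Set Y)
    (hA : ∀ n, (A n).Nonempty) (hB : ∀ n, (B n).Nonempty)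
    (hAnet : ∀ n (x : X), ∃ a ∈ A n, dist x a ≤ ε n)
    (hBnet : ∀ n (y : Y), ∃ b ∈ B n, dist y b ≤ ε n)
    (T : ∀ n, A n → B n) (hT : ∀ n, Function.Bijective (T n))
    (δ : ℕ → ℝ) (hδ : Tendsto δ atTop (𝓝 0))
    (hdis : ∀ n (x y : A n),
      |dist (x : X) (y : X) - dist (↑(T n x) : Y) (↑(T n y) : Y)| ≤ δ n) :
    ∃ φ : ℕ → ℕ, StrictMono φ ∧
      ∃ H : X ≃ Y, (∀ x y : X, dist (H x) (H y) = dist x y) ∧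
        (∀ η > (0 : ℝ), ∃ N, ∀ k ≥ N, ∀ p : A (φ k),
          dist (↑(T (φ k) p) : Y) (H (p : X)) ≤ η) ∧
        (∀ η > (0 : ℝ), ∃ N, ∀ k ≥ N, ∀ p : A (φ k),
          dist (p : X) (H.symm (↑(T (φ k) p) : Y)) ≤ η) := by
  have hTnet (n : ℕ) (y : Y) : ∃ p : A n, dist y (T n p) ≤ ε n :=
    ((hT n).surjective.exists (p := fun b => dist y b ≤ ε n)).1 (by simpa using hBnet n y)
  obtain ⟨φ, hφ, H, hH⟩ := limit_isometry_of_net_bijections_general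
    (.of_dist_le hε hδ (fun n x => by simpa using hAnet n x) hTnet hdis)
  exact ⟨φ, hφ, H.toEquiv, H.dist_eq, hH⟩
end

section
/- Let (X, d_X) and (Y, d_Y) be nonempty compact metric spaces. Suppose that for every n there exist a positive real ε_n with ε_n → 0, nonempty ε_n-nets A_n ⊆ X and B_n ⊆ Y, and a bijection H_n : A_n → B_n with dis H_n → 0 (distortion with respect to the ambient distances). Then X and Y are isometric: there exists a distance-preserving bijection H : X → Y. -/
open Filter Topology

theorem exists_dist_coe_le_of_surjective {α Y : Type*} [PseudoMetricSpace Y] {B : Set Y} {r : ℝ}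
    {f : α → B} (hf : Function.Surjective f) (hB : ∀ y, ∃ b ∈ B, dist y b ≤ r) (y : Y) :
    ∃ a, dist y (f a) ≤ r := by
  obtain ⟨b, hb, hyb⟩ := hB y
  obtain ⟨a, ha⟩ := hf ⟨b, hb⟩
  exact ⟨a, by rwa [ha]⟩

section

variable {X Y : Type*} [MetricSpace X] [CompactSpace X] [Nonempty X]
  [MetricSpace Y] [CompactSpace Y] [Nonempty Y]

theorem ghDist_eq_zero_iff_nonempty_isometryEquiv :
    GromovHausdorff.ghDist X Y = 0 ↔ Nonempty (X ≃ᵢ Y) :=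
  dist_eq_zero.trans GromovHausdorff.toGHSpace_eq_toGHSpace_iff_isometryEquiv

theorem isometric_of_net_bijections_general {ι : Type*} {l : Filter ι} [l.NeBot]
    {ε δ η : ι → ℝ} (hε : Tendsto ε l (𝓝 0)) (hδ : Tendsto δ l (𝓝 0)) (hη : Tendsto η l (𝓝 0))
    {A : ι → Set X} (hA : ∀ i x, ∃ a ∈ A i, dist x a ≤ ε i)
    (f : ∀ i, A i → Y) (hf : ∀ i y, ∃ a, dist y (f i a) ≤ η i)
    (hdis : ∀ i (a b : A i), |dist a b - dist (f i a) (f i b)| ≤ δ i) :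
    Nonempty (X ≃ᵢ Y) := by
  have ghDist_le (i : ι) : GromovHausdorff.ghDist X Y ≤ ε i + δ i / 2 + η i :=
    GromovHausdorff.ghDist_le_of_approx_subsets (f i) (hA i) (hf i) (hdis i)
  have tendsto_bound : Tendsto (fun i ↦ ε i + δ i / 2 + η i) l (𝓝 0) := by
    simpa using (hε.add (hδ.div_const 2)).add hη
  have ghDist_nonpos : GromovHausdorff.ghDist X Y ≤ 0 := ge_of_tendsto' tendsto_bound ghDist_le
  exact ghDist_eq_zero_iff_nonempty_isometryEquiv.1 (ghDist_nonpos.antisymm dist_nonneg)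

end

/-- Two compact metric spaces admitting bijections between ε_n-nets
with vanishing distortion (ε_n → 0) are isometric. -/
theorem isometric_of_net_bijections
    {X Y : Type*} [MetricSpace X] [CompactSpace X] [Nonempty X]
    [MetricSpace Y] [CompactSpace Y] [Nonempty Y]
    (ε : ℕ → ℝ) (hεpos : ∀ n, 0 < ε n) (hε : Tendsto ε atTop (𝓝 0))
    (A : ℕ → Set X) (B : ℕ → Set Y)
    (hA : ∀ n, (A n).Nonempty) (hB : ∀ n, (B n).Nonempty)
    (hAnet : ∀ n (x : X), ∃ a ∈ A n, dist x a ≤ ε n)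
    (hBnet : ∀ n (y : Y), ∃ b ∈ B n, dist y b ≤ ε n)
    (T : ∀ n, A n → B n) (hT : ∀ n, Function.Bijective (T n))
    (δ : ℕ → ℝ) (hδ : Tendsto δ atTop (𝓝 0))
    (hdis : ∀ n (x y : A n),
      |dist (x : X) (y : X) - dist (↑(T n x) : Y) (↑(T n y) : Y)| ≤ δ n) :
    ∃ H : X ≃ Y, ∀ x y : X, dist (H x) (H y) = dist x y := by
  obtain ⟨e⟩ := isometric_of_net_bijections_general hε hδ hε hAnet (fun n a ↦ (T n a : Y))
    (fun n ↦ exists_dist_coe_le_of_surjective (hT n).surjective (hBnet n)) hdis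
  exact ⟨e.toEquiv, e.dist_eq⟩
end

section
/- Let d ≥ 1, let A be a real d × d matrix with det A > 0, and let Q ∈ SO(d) be a special orthogonal matrix. Then |det A − 1| ≤ (‖A − Q‖ + 1)^d − 1, where ‖·‖ denotes the operator norm with respect to the Euclidean norm on ℝ^d. In particular |det A − 1| ≤ (dist(A, SO(d)) + 1)^d − 1, where dist(A, SO(d)) = inf_{Q ∈ SO(d)} ‖A − Q‖. -/
open Matrix

/-- The operator norm of a real `d × d` matrix, acting on Euclidean `ℝ^d`. -/
noncomputable def matrixOpNorm {d : ℕ} (M : Matrix (Fin d) (Fin d) ℝ) : ℝ :=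
  ‖Matrix.toEuclideanCLM (𝕜 := ℝ) M‖

/-- The distance (in operator norm) from a matrix to the special orthogonal group `SO(d)`. -/
noncomputable def distToSO {d : ℕ} (A : Matrix (Fin d) (Fin d) ℝ) : ℝ :=
  sInf {r : ℝ | ∃ Q : Matrix (Fin d) (Fin d) ℝ,
    Qᵀ * Q = 1 ∧ Q.det = 1 ∧ r = matrixOpNorm (A - Q)}

/-!
The determinant is multilinear in the images of an orthonormal basis, and Hadamard's inequality
bounds it by the product of their norms. Expanding `det A = det (Q + (A - Q))` over the subsets of
columns taken from `A - Q`, each nonempty subset of size `k` contributes at most `‖A - Q‖ ^ k`,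
and these contributions sum to `(‖A - Q‖ + 1) ^ d - 1`.
-/

theorem norm_multilinear_sub_le_pow_sub_pow {R ι G : Type*} {E : ι → Type*} [Fintype ι]
    [Semiring R] [∀ i, SeminormedAddCommGroup (E i)] [∀ i, Module R (E i)]
    [SeminormedAddCommGroup G] [Module R G] (f : MultilinearMap R E G) {C a b : ℝ} (hC : 0 ≤ C)
    (hf : ∀ m, ‖f m‖ ≤ C * ∏ i, ‖m i‖) {u v : ∀ i, E i} (huv : ∀ i, ‖u i - v i‖ ≤ a)
    (hv : ∀ i, ‖v i‖ ≤ b) :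
    ‖f u - f v‖ ≤ C * ((a + b) ^ Fintype.card ι - b ^ Fintype.card ι) := by
  classical
  have expansion : f u - f v =
      ∑ s ∈ (Finset.univ : Finset (Finset ι)).erase ∅, f (s.piecewise (u - v) v) := by
    rw [Finset.sum_erase_eq_sub (Finset.mem_univ _), ← f.map_add_univ, sub_add_cancel,
      Finset.piecewise_empty]
  have term_le (s : Finset ι) :
      ‖f (s.piecewise (u - v) v)‖ ≤ C * (a ^ s.card * b ^ (Fintype.card ι - s.card)) := by
    refine (hf _).trans (mul_le_mul_of_nonneg_left ?_ hC)
    calc ∏ i, ‖s.piecewise (u - v) v i‖ ≤ ∏ i, s.piecewise (fun _ ↦ a) (fun _ ↦ b) i := by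
          refine Finset.prod_le_prod (fun _ _ ↦ norm_nonneg _) fun i _ ↦ ?_
          by_cases hi : i ∈ s <;> simp [hi, huv, hv]
      _ = a ^ s.card * b ^ (Fintype.card ι - s.card) := by
          simp [Finset.prod_piecewise, Finset.card_sdiff]
  calc ‖f u - f v‖
      ≤ ∑ s ∈ (Finset.univ : Finset (Finset ι)).erase ∅,
          C * (a ^ s.card * b ^ (Fintype.card ι - s.card)) := by
        rw [expansion]
        exact norm_sum_le_of_le _ fun s _ ↦ term_le s
    _ = C * ((a + b) ^ Fintype.card ι - b ^ Fintype.card ι) := by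
        rw [← Finset.mul_sum, Finset.sum_erase_eq_sub (Finset.mem_univ _),
          Fintype.sum_pow_mul_eq_add_pow]
        simp

section InnerProductSpace

variable {𝕜 E : Type*} [RCLike 𝕜] [NormedAddCommGroup E] [InnerProductSpace 𝕜 E]

theorem norm_orthonormalBasis_det_le {ι : Type*} [Fintype ι] [DecidableEq ι]
    (b : OrthonormalBasis ι 𝕜 E) (v : ι → E) : ‖b.toBasis.det v‖ ≤ ∏ i, ‖v i‖ := by
  have : FiniteDimensional 𝕜 E := b.toBasis.finiteDimensional_of_finite
  let : LinearOrder ι := LinearOrder.lift' (Fintype.equivFin ι) (Fintype.equivFin ι).injective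
  let : LocallyFiniteOrderBot ι :=
    LocallyFiniteOrderBot.ofIic ι (fun i ↦ {j | j ≤ i}) (by simp)
  let g := InnerProductSpace.gramSchmidtOrthonormalBasis (Module.finrank_eq_card_basis b.toBasis) v
  -- The coordinate matrix of `v` in its Gram–Schmidt basis `g` is triangular.
  calc ‖b.toBasis.det v‖ = ‖b.toBasis.det g‖ * ‖g.toBasis.det v‖ := by
        rw [← norm_mul, ← g.coe_toBasis, b.toBasis.det.eq_smul_basis_det g.toBasis]
        simp
    _ = ∏ i, ‖inner 𝕜 (g i) (v i)‖ := by
        rw [b.det_to_matrix_orthonormalBasis g, one_mul, ← norm_prod]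
        congr 1
        convert InnerProductSpace.gramSchmidtOrthonormalBasis_det _ v
    _ ≤ ∏ i, ‖v i‖ := by
        refine Finset.prod_le_prod (fun _ _ ↦ norm_nonneg _) fun i _ ↦ ?_
        simpa using norm_inner_le_norm (𝕜 := 𝕜) (g i) (v i)

theorem norm_det_sub_det_le_pow_sub_pow [FiniteDimensional 𝕜 E] (S T : E →L[𝕜] E) {c : ℝ}
    (hT : ‖T‖ ≤ c) :
    ‖S.det - T.det‖ ≤ (‖S - T‖ + c) ^ Module.finrank 𝕜 E - c ^ Module.finrank 𝕜 E := by
  let b := stdOrthonormalBasis 𝕜 E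
  have det_eq (L : E →L[𝕜] E) : L.det = b.toBasis.det fun i ↦ L (b i) := by
    have det_comp := b.toBasis.det_comp (L : E →ₗ[𝕜] E) b.toBasis
    rw [b.toBasis.det_self, mul_one] at det_comp
    simpa [Function.comp_def] using det_comp.symm
  have norm_apply_le (L : E →L[𝕜] E) (i) : ‖L (b i)‖ ≤ ‖L‖ :=
    L.unit_le_opNorm _ (b.norm_eq_one i).le
  rw [det_eq S, det_eq T]
  simpa using norm_multilinear_sub_le_pow_sub_pow b.toBasis.det.toMultilinearMap zero_le_one
    (by simpa using! norm_orthonormalBasis_det_le b) (fun i ↦ norm_apply_le (S - T) i)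
    (fun i ↦ (norm_apply_le T i).trans hT)

end InnerProductSpace

section Matrix

variable {𝕜 n : Type*} [RCLike 𝕜] [Fintype n] [DecidableEq n]

theorem det_toEuclideanCLM (A : Matrix n n 𝕜) : (toEuclideanCLM (𝕜 := 𝕜) A).det = A.det := by
  rw [ContinuousLinearMap.det, coe_toEuclideanCLM_eq_toEuclideanLin,
    toEuclideanLin_eq_toLin_orthonormal, LinearMap.det_toLin]

theorem norm_toEuclideanCLM_le_one_of_mem_unitaryGroup {U : Matrix n n 𝕜}
    (hU : U ∈ unitaryGroup n 𝕜) : ‖toEuclideanCLM (𝕜 := 𝕜) U‖ ≤ 1 := by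
  have mem_unitary := Unitary.map_mem (toEuclideanCLM (n := n) (𝕜 := 𝕜)) hU
  exact ContinuousLinearMap.opNorm_le_bound _ zero_le_one fun x ↦ by
    rw [ContinuousLinearMap.norm_map_of_mem_unitary mem_unitary, one_mul]

theorem norm_det_sub_det_le_of_mem_unitaryGroup (A : Matrix n n 𝕜) {U : Matrix n n 𝕜}
    (hU : U ∈ unitaryGroup n 𝕜) :
    ‖A.det - U.det‖ ≤ (‖toEuclideanCLM (𝕜 := 𝕜) (A - U)‖ + 1) ^ Fintype.card n - 1 := by
  simpa [det_toEuclideanCLM] using norm_det_sub_det_le_pow_sub_pow (toEuclideanCLM (𝕜 := 𝕜) A)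
    (toEuclideanCLM (𝕜 := 𝕜) U) (norm_toEuclideanCLM_le_one_of_mem_unitaryGroup hU)

end Matrix

theorem distToSO_mem_of_isClosed {d : ℕ} (A : Matrix (Fin d) (Fin d) ℝ) {s : Set ℝ}
    (hs : IsClosed s)
    (h : ∀ Q : Matrix (Fin d) (Fin d) ℝ, Qᵀ * Q = 1 → Q.det = 1 → matrixOpNorm (A - Q) ∈ s) :
    distToSO A ∈ s := by
  refine hs.closure_subset_iff.mpr ?_ (csInf_mem_closure ?_ ?_)
  · rintro _ ⟨Q, hQorth, hQdet, rfl⟩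
    exact h Q hQorth hQdet
  · exact ⟨_, 1, by simp, det_one, rfl⟩
  · exact ⟨0, by rintro _ ⟨Q, -, -, rfl⟩; exact norm_nonneg _⟩

theorem abs_det_sub_one_le_of_dist_SO_general {d : ℕ} (A Q : Matrix (Fin d) (Fin d) ℝ)
    (hQorth : Qᵀ * Q = 1) (hQdet : Q.det = 1) :
    |A.det - 1| ≤ (matrixOpNorm (A - Q) + 1) ^ d - 1 ∧
    |A.det - 1| ≤ (distToSO A + 1) ^ d - 1 := by
  have bound (R : Matrix (Fin d) (Fin d) ℝ) (hRorth : Rᵀ * R = 1) (hRdet : R.det = 1) :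
      |A.det - 1| ≤ (matrixOpNorm (A - R) + 1) ^ d - 1 := by
    have hR : R ∈ unitaryGroup (Fin d) ℝ := mem_unitaryGroup_iff'.mpr hRorth
    simpa [hRdet, matrixOpNorm] using norm_det_sub_det_le_of_mem_unitaryGroup A hR
  have closed : IsClosed {r : ℝ | |A.det - 1| ≤ (r + 1) ^ d - 1} :=
    isClosed_le continuous_const (by fun_prop)
  exact ⟨bound Q hQorth hQdet, distToSO_mem_of_isClosed A closed bound⟩

/-- second part of the geometric Hadamard inequality.
If `det A > 0` and `Q ∈ SO(d)`, then `|det A − 1| ≤ (‖A − Q‖ + 1)^d − 1`; in particular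
`|det A − 1| ≤ (dist(A, SO(d)) + 1)^d − 1`. -/
theorem abs_det_sub_one_le_of_dist_SO
    (d : ℕ) (hd : 1 ≤ d)
    (A Q : Matrix (Fin d) (Fin d) ℝ)
    (hdet : 0 < A.det)
    (hQorth : Qᵀ * Q = 1) (hQdet : Q.det = 1) :
    |A.det - 1| ≤ (matrixOpNorm (A - Q) + 1) ^ d - 1 ∧
    |A.det - 1| ≤ (distToSO A + 1) ^ d - 1 :=
  abs_det_sub_one_le_of_dist_SO_general A Q hQorth hQdet
end

section
/- Let d ≥ 1, let 0 ≤ ε < 1, and let D and E be real d × d matrices such that there exist Q_D, Q_E ∈ O(d) with ‖D − Q_D‖ ≤ ε and ‖E − Q_E‖ ≤ ε (operator norm). Then E is invertible and there exists S ∈ O(d) with ‖D E^{-1} − S‖ ≤ 2ε/(1 − ε); that is, dist(D E^{-1}, O(d)) ≤ 2ε/(1 − ε). -/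
open Matrix

/-!
Let `u`, `v` be unitaries near `a`, `c`, and put `s = v * star u`. Multiplication by `u` is
isometric, so right multiplication by `a` scales norms by a factor of at least `1 - ‖a - u‖`.
Apply this to `c * a⁻¹ - s`: multiplied by `a` it becomes `c - s * a = (c - v) - s * (a - u)`,
whose norm is at most `‖c - v‖ + ‖a - u‖`.
-/

section CStarRing

variable {A : Type*} [NormedRing A] [StarRing A] [CStarRing A] {u v : A}

theorem isUnit_of_norm_sub_unitary_lt_one [HasSummableGeomSeries A] {a : A}
    (hu : u ∈ unitary A) (ha : ‖a - u‖ < 1) : IsUnit a := by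
  have hnorm : ‖star u * (u - a)‖ < 1 := by
    rwa [CStarRing.norm_mem_unitary_mul _ (Unitary.star_mem hu), norm_sub_rev]
  have hfactor : a = u * (1 - star u * (u - a)) := by
    rw [mul_sub, mul_one, ← mul_assoc, Unitary.mul_star_self_of_mem hu, one_mul, sub_sub_cancel]
  rw [hfactor]
  exact (Unitary.toUnits ⟨u, hu⟩).isUnit.mul (isUnit_one_sub_of_norm_lt_one hnorm)

theorem one_sub_norm_sub_unitary_mul_norm_le (hu : u ∈ unitary A) (a x : A) :
    (1 - ‖a - u‖) * ‖x‖ ≤ ‖x * a‖ := by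
  have hx : ‖x‖ ≤ ‖x * a‖ + ‖x‖ * ‖a - u‖ :=
    calc ‖x‖ = ‖x * u‖ := (CStarRing.norm_mul_mem_unitary x hu).symm
      _ = ‖x * a - x * (a - u)‖ := by rw [← mul_sub, sub_sub_cancel]
      _ ≤ ‖x * a‖ + ‖x * (a - u)‖ := norm_sub_le _ _
      _ ≤ ‖x * a‖ + ‖x‖ * ‖a - u‖ := by gcongr; exact norm_mul_le _ _
  linarith

theorem norm_sub_mul_star_mul_le (hu : u ∈ unitary A) (hv : v ∈ unitary A) (a c : A) :
    ‖c - v * star u * a‖ ≤ ‖c - v‖ + ‖a - u‖ :=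
  calc ‖c - v * star u * a‖ = ‖(c - v) - v * star u * (a - u)‖ := by
        rw [mul_sub, mul_assoc v (star u) u, Unitary.star_mul_self_of_mem hu, mul_one,
          sub_sub_sub_cancel_right]
    _ ≤ ‖c - v‖ + ‖v * star u * (a - u)‖ := norm_sub_le _ _
    _ = ‖c - v‖ + ‖a - u‖ := by
        rw [CStarRing.norm_mem_unitary_mul _ (mul_mem hv (Unitary.star_mem hu))]

theorem norm_mul_inverse_sub_mul_star_le (hu : u ∈ unitary A) (hv : v ∈ unitary A)
    {a : A} (ha : IsUnit a) (hau : ‖a - u‖ < 1) (c : A) :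
    ‖c * Ring.inverse a - v * star u‖ ≤ (‖c - v‖ + ‖a - u‖) / (1 - ‖a - u‖) := by
  rw [le_div_iff₀' (sub_pos.mpr hau)]
  calc (1 - ‖a - u‖) * ‖c * Ring.inverse a - v * star u‖
      ≤ ‖(c * Ring.inverse a - v * star u) * a‖ := one_sub_norm_sub_unitary_mul_norm_le hu _ _
    _ = ‖c - v * star u * a‖ := by rw [sub_mul, Ring.inverse_mul_cancel_right _ _ ha]
    _ ≤ ‖c - v‖ + ‖a - u‖ := norm_sub_mul_star_mul_le hu hv a c

theorem transition_matrix_close_to_orthogonal_general [HasSummableGeomSeries A] {a c : A}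
    {δ ε : ℝ} (hε : ε < 1) (hu : u ∈ unitary A) (hv : v ∈ unitary A)
    (hc : ‖c - v‖ ≤ δ) (ha : ‖a - u‖ ≤ ε) :
    IsUnit a ∧ ∃ s ∈ unitary A, ‖c * Ring.inverse a - s‖ ≤ (δ + ε) / (1 - ε) := by
  have hau : ‖a - u‖ < 1 := ha.trans_lt hε
  have hunit : IsUnit a := isUnit_of_norm_sub_unitary_lt_one hu hau
  refine ⟨hunit, v * star u, mul_mem hv (Unitary.star_mem hu), ?_⟩
  calc ‖c * Ring.inverse a - v * star u‖
      ≤ (‖c - v‖ + ‖a - u‖) / (1 - ‖a - u‖) :=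
        norm_mul_inverse_sub_mul_star_le hu hv hunit hau c
    _ ≤ (δ + ε) / (1 - ε) := by
        have : 0 < 1 - ε := sub_pos.mpr hε
        have : 0 ≤ δ + ε := by linarith [norm_nonneg (c - v), norm_nonneg (a - u)]
        gcongr

end CStarRing

theorem mem_unitaryGroup_iff_transpose_mul_self {n R : Type*} [Fintype n] [DecidableEq n]
    [CommRing R] [StarRing R] [TrivialStar R] {Q : Matrix n n R} :
    Q ∈ unitaryGroup n R ↔ Qᵀ * Q = 1 := by
  rw [mem_unitaryGroup_iff', star_eq_conjTranspose, conjTranspose_eq_transpose_of_trivial]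

open scoped Matrix.Norms.L2Operator

theorem matrixOpNorm_eq_norm {d : ℕ} (M : Matrix (Fin d) (Fin d) ℝ) : matrixOpNorm M = ‖M‖ :=
  rfl

/-- If `D` and `E` are each within operator-norm distance `ε < 1` of
orthogonal matrices, then `E` is invertible and `D * E⁻¹` is within `2ε/(1 − ε)` of an
orthogonal matrix. -/
theorem transition_matrix_close_to_orthogonal
    (d : ℕ) (hd : 1 ≤ d)
    (ε : ℝ) (hε0 : 0 ≤ ε) (hε1 : ε < 1)
    (D E QD QE : Matrix (Fin d) (Fin d) ℝ)
    (hQD : QDᵀ * QD = 1) (hQE : QEᵀ * QE = 1)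
    (hD : matrixOpNorm (D - QD) ≤ ε)
    (hE : matrixOpNorm (E - QE) ≤ ε) :
    IsUnit E ∧ ∃ S : Matrix (Fin d) (Fin d) ℝ, Sᵀ * S = 1 ∧
      matrixOpNorm (D * E⁻¹ - S) ≤ 2 * ε / (1 - ε) := by
  simp only [matrixOpNorm_eq_norm, ← mem_unitaryGroup_iff_transpose_mul_self,
    nonsing_inv_eq_ringInverse, two_mul] at hQD hQE hD hE ⊢
  exact transition_matrix_close_to_orthogonal_general hε1 hQE hQD hD hE
end

section
/- Let α, β, δ > 0 and set R = αβ/δ. Define S' : ℝ² → ℝ² by S'(x, y) = (x·cos(yδ/(αβ)), x·sin(yδ/(αβ))). Then for every (x, y) with R ≤ x ≤ R + β and 0 ≤ y ≤ α, the Euclidean distance satisfies ‖S'(x, y) − (x, y)‖ ≤ (α + δ)δ/(2β) + δ + (α + δ)δ²/(6β²). -/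
/-!
Identify `ℝ²` with `ℂ` and put `θ = yδ/(αβ)`, so that `y = Rθ` and the point `x + iRθ` is sent to
`x exp(iθ)`. The displacement is `x (exp(iθ) - 1 - iθ) + i(x - R)θ`; its first summand is a
second-order Taylor remainder, of norm at most `|x| θ² / 2`. Since `|θ| ≤ δ/β` and `R δ/β = α`, this
yields the bound even without its cubic term.
-/

open Complex Set

theorem norm_exp_I_mul_ofReal_sub_one_sub_le (θ : ℝ) :
    ‖exp (I * θ) - 1 - I * θ‖ ≤ θ ^ 2 / 2 := by
  -- Moving along the segment from `0` to `θ` treats both signs of `θ` at once.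
  let remainder (t : ℝ) : ℂ := exp (I * (t * θ : ℝ)) - 1 - I * (t * θ : ℝ)
  have hasDerivAt_remainder (t : ℝ) :
      HasDerivAt remainder (I * θ * (exp (I * (t * θ : ℝ)) - 1)) t := by
    have hasDerivAt_arg : HasDerivAt (fun s : ℝ ↦ I * (s * θ : ℝ)) (I * θ) t := by
      simpa using ((hasDerivAt_id t).mul_const θ).ofReal_comp.const_mul I
    exact ((hasDerivAt_arg.cexp.sub_const 1).sub hasDerivAt_arg).congr_deriv (by ring)
  have hasDerivAt_bound (t : ℝ) : HasDerivAt (fun s ↦ θ ^ 2 * s ^ 2 / 2) (θ ^ 2 * t) t :=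
    (((hasDerivAt_pow 2 t).const_mul (θ ^ 2)).div_const 2).congr_deriv (by ring)
  have norm_deriv_le (t : ℝ) (ht : t ∈ Ico 0 1) :
      ‖I * θ * (exp (I * (t * θ : ℝ)) - 1)‖ ≤ θ ^ 2 * t :=
    calc ‖I * θ * (exp (I * (t * θ : ℝ)) - 1)‖
        = |θ| * ‖exp (I * (t * θ : ℝ)) - 1‖ := by simp
      _ ≤ |θ| * ‖t * θ‖ := by gcongr; exact Real.norm_exp_I_mul_ofReal_sub_one_le
      _ = θ ^ 2 * t := by rw [norm_mul, Real.norm_of_nonneg ht.1, Real.norm_eq_abs, ← sq_abs]; ring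
  have norm_remainder_le := image_norm_le_of_norm_deriv_right_le_deriv_boundary
    (fun t _ ↦ (hasDerivAt_remainder t).continuousAt.continuousWithinAt)
    (fun t _ ↦ (hasDerivAt_remainder t).hasDerivWithinAt)
    (by simp [remainder]) hasDerivAt_bound norm_deriv_le (right_mem_Icc.mpr zero_le_one)
  simpa [remainder] using norm_remainder_le

theorem norm_mul_exp_I_mul_sub_le (x R θ : ℝ) :
    ‖x * exp (I * θ) - (x + I * (R * θ))‖ ≤ |x| * (θ ^ 2 / 2) + |x - R| * |θ| :=
  calc ‖x * exp (I * θ) - (x + I * (R * θ))‖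
      = ‖x * (exp (I * θ) - 1 - I * θ) + I * ((x - R : ℝ) * θ)‖ := by
        push_cast
        ring_nf
    _ ≤ |x| * ‖exp (I * θ) - 1 - I * θ‖ + |x - R| * |θ| := by
        refine (norm_add_le _ _).trans_eq ?_
        simp only [norm_mul, norm_I, norm_real, Real.norm_eq_abs, one_mul]
    _ ≤ |x| * (θ ^ 2 / 2) + |x - R| * |θ| := by
        gcongr
        exact norm_exp_I_mul_ofReal_sub_one_sub_le θ

theorem sqrt_polar_sub_sq_eq_norm (x y θ : ℝ) :
    √((x * Real.cos θ - x) ^ 2 + (x * Real.sin θ - y) ^ 2) =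
      ‖x * exp (I * θ) - (x + I * y)‖ := by
  rw [norm_eq_sqrt_sq_add_sq, mul_comm I (θ : ℂ)]
  simp [exp_ofReal_mul_I_re, exp_ofReal_mul_I_im]

theorem annulus_sector_map_displacement_bound_general
    (α β δ : ℝ) (hα : 0 < α) (hβ : 0 < β) (hδ : 0 < δ)
    (R : ℝ) (hR : R = α * β / δ)
    (x y : ℝ) (hx : |x - R| ≤ β) (hy : |y| ≤ α) :
    √((x * Real.cos (y * δ / (α * β)) - x) ^ 2 + (x * Real.sin (y * δ / (α * β)) - y) ^ 2) ≤
      (α + δ) * δ / (2 * β) + δ := by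
  set θ := y * δ / (α * β) with hθ
  have y_eq : y = R * θ := by rw [hR, hθ]; field_simp
  have abs_θ_le : |θ| ≤ δ / β :=
    calc |θ| = |y| * δ / (α * β) := by
          rw [hθ, abs_div, abs_mul, abs_of_pos hδ, abs_of_pos (mul_pos hα hβ)]
      _ ≤ α * δ / (α * β) := by gcongr
      _ = δ / β := mul_div_mul_left δ β hα.ne'
  have R_pos : 0 < R := hR ▸ by positivity
  have abs_x_le : |x| ≤ R + β := by rw [abs_le] at hx ⊢; constructor <;> linarith
  calc √((x * Real.cos θ - x) ^ 2 + (x * Real.sin θ - y) ^ 2)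
      = ‖x * exp (I * θ) - (x + I * (R * θ))‖ := by
        rw [sqrt_polar_sub_sq_eq_norm, y_eq, ofReal_mul]
    _ ≤ |x| * (|θ| ^ 2 / 2) + |x - R| * |θ| := by
        rw [sq_abs]
        exact norm_mul_exp_I_mul_sub_le x R θ
    _ ≤ (R + β) * ((δ / β) ^ 2 / 2) + β * (δ / β) := by gcongr
    _ = (α + δ) * δ / (2 * β) + δ := by rw [hR]; field_simp

/-- Quantitative estimate for the map `S'(x,y) =
(x cos(yδ/(αβ)), x sin(yδ/(αβ)))` sending the rectangle
`[αβ/δ, αβ/δ + β] × [0, α]` onto an annulus sector: every point moves by at most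
`(α + δ)δ/(2β) + δ + (α + δ)δ²/(6β²)`. -/
theorem annulus_sector_map_displacement_bound
    (α β δ : ℝ) (hα : 0 < α) (hβ : 0 < β) (hδ : 0 < δ)
    (R : ℝ) (hR : R = α * β / δ)
    (x y : ℝ) (hx1 : R ≤ x) (hx2 : x ≤ R + β) (hy1 : 0 ≤ y) (hy2 : y ≤ α) :
    Real.sqrt ((x * Real.cos (y * δ / (α * β)) - x) ^ 2 +
        (x * Real.sin (y * δ / (α * β)) - y) ^ 2) ≤
      (α + δ) * δ / (2 * β) + δ + (α + δ) * δ ^ 2 / (6 * β ^ 2) := by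
  have sharper := annulus_sector_map_displacement_bound_general α β δ hα hβ hδ R hR x y
    (abs_le.mpr ⟨by linarith, by linarith⟩) (abs_le.mpr ⟨by linarith, hy2⟩)
  exact sharper.trans (le_add_of_nonneg_right (by positivity))
end
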